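/- Let X, Y be jointly distributed random variables where Y is discrete (or more generally Y = g(X, Z) with Z ⊥ X and each conditional law P_{Y|Z=z} purely atomic). Then D_KL(P_{X|Y=y} ‖ P_X) ≤ D_CS(P_{X|Y=y} ‖ P_X) for P_Y-almost every y, and hence I(X;Y) ≤ E_Y[ D_CS(P_{X|Y} ‖ P_X) ]. -/

import Mathlib

open MeasureTheory Real

/-!
Let `r = dQ/dP` and let `(X, H)` have `X ∼ Q` and, given `X`, `H` uniform on `(0, r X]`: this is
`P ⊗ dh` restricted to the hypograph of `r`. Then `H` has density `w h = P {h ≤ r}` on `(0, ∞)`, so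
that `E log r(X) = D_KL(Q‖P)` and `E log w(H) = -D_CS(Q‖P)`. Integrating
`log (r(X) w(H)) ≤ r(X) w(H) - 1`, whose right-hand side has mean at most
`(∫ r dP) (∫ w dh) - 1 = 0`, gives `D_KL ≤ D_CS`.

Finiteness of `D_CS` already forces finiteness of `D_KL`: the same inequality bounds `log r(X)` from
above, and `log H ≤ log r(X)` bounds it from below.
-/

lemma mul_log_le_mul_log_sub_add {a k : ℝ} (ha : 0 ≤ a) (hk : 0 < k) :
    a * log k ≤ a * log a - a + k := by
  rcases ha.eq_or_lt with rfl | ha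
  · simpa using hk.le
  · have hlog : log k - log a ≤ k / a - 1 := by
      rw [← log_div hk.ne' ha.ne']
      exact log_le_sub_one_of_pos (div_pos hk ha)
    have hmul := mul_le_mul_of_nonneg_left hlog ha.le
    have hcancel : a * (k / a - 1) = k - a := by field_simp
    linarith

-- Young's inequality against the integrable weight `h ^ (-1/2)` on `(0, 1)`.
lemma integrableOn_mul_posLog_inv {w : ℝ → ℝ} (hw0 : ∀ h, 0 ≤ w h)
    (hw : IntegrableOn w (Set.Ioi 0)) (hwlog : IntegrableOn (fun h ↦ w h * log (w h)) (Set.Ioi 0)) :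
    IntegrableOn (fun h ↦ w h * log⁺ h⁻¹) (Set.Ioi 0) := by
  have hmeas : AEStronglyMeasurable (fun h ↦ w h * log⁺ h⁻¹) (volume.restrict (Set.Ioi 0)) :=
    hw.aestronglyMeasurable.mul
      (continuous_posLog.measurable.comp measurable_inv).aestronglyMeasurable
  have hnear : IntegrableOn (fun h ↦ w h * log⁺ h⁻¹) (Set.Ioo 0 1) := by
    have hsub : Set.Ioo (0 : ℝ) 1 ⊆ Set.Ioi 0 := Set.Ioo_subset_Ioi_self
    have hrpow : IntegrableOn (fun h : ℝ ↦ h ^ (-(1 / 2) : ℝ)) (Set.Ioo 0 1) :=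
      (intervalIntegral.integrableOn_Ioo_rpow_iff one_pos).2 (by norm_num)
    refine integrable_of_le_of_le (hmeas.mono_measure (Measure.restrict_mono_set _ hsub))
      (.of_forall fun h ↦ mul_nonneg (hw0 h) posLog_nonneg) ?_ (integrable_zero _ _ _)
      ((((hwlog.mono_set hsub).sub (hw.mono_set hsub)).add hrpow).const_mul 2)
    filter_upwards [ae_restrict_mem measurableSet_Ioo] with h ⟨h0, h1⟩
    have hposLog : log⁺ h⁻¹ = 2 * log (h ^ (-(1 / 2) : ℝ)) := by
      rw [posLog_eq_log (by rw [abs_of_pos (inv_pos.2 h0)]; exact (one_le_inv₀ h0).2 h1.le),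
        log_inv, log_rpow h0]
      ring
    have hyoung := mul_log_le_mul_log_sub_add (hw0 h) (rpow_pos_of_pos h0 (-(1 / 2)))
    simp only [Pi.add_apply, Pi.sub_apply, hposLog]
    linarith
  have hfar : IntegrableOn (fun h ↦ w h * log⁺ h⁻¹) (Set.Ici 1) := by
    refine integrableOn_zero.congr_fun (fun h (h1 : 1 ≤ h) ↦ ?_) measurableSet_Ici
    have hzero : log⁺ h⁻¹ = 0 := by
      rw [posLog_eq_zero_iff, abs_of_pos (inv_pos.2 (one_pos.trans_le h1))]
      exact inv_le_one_of_one_le₀ h1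
    simp [hzero]
  simpa only [Set.Ioo_union_Ici_eq_Ioi one_pos] using hnear.union hfar

section ChannelSimulation

variable {α : Type*} [MeasurableSpace α] {P Q : Measure α} {r f : α → ℝ} {g : ℝ → ℝ}

/-- The width function `w_P(h) = P {x | h ≤ r x}` of a density `r`. It is real-valued: an infinite
superlevel set is given the value `0`, which for integrable `r` can only happen when `h ≤ 0`. -/
noncomputable def widthFunction (P : Measure α) (r : α → ℝ) (h : ℝ) : ℝ :=
  P.real {x | h ≤ r x}

/-- The measure `P ⊗ dh` on the hypograph `{(x, h) | 0 < h ≤ r x}`. If `r` is a probability density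
with respect to `P`, it is the joint law of a point `X` with density `r` and a height that is,
given `X`, uniform on `(0, r X]`. -/
noncomputable def hypographMeasure (P : Measure α) (r : α → ℝ) : Measure (α × ℝ) :=
  (P.prod (volume.restrict (Set.Ioi 0))).restrict {p | p.2 ≤ r p.1}

lemma measurableSet_hypograph (hr : Measurable r) : MeasurableSet {p : α × ℝ | p.2 ≤ r p.1} :=
  measurableSet_le measurable_snd (hr.comp measurable_fst)

lemma ae_hypographMeasure_pos_and_le (hr : Measurable r) :
    ∀ᵐ p ∂hypographMeasure P r, 0 < p.2 ∧ p.2 ≤ r p.1 :=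
  (ae_restrict_of_ae (Measure.quasiMeasurePreserving_snd.ae
    (ae_restrict_mem measurableSet_Ioi))).and (ae_restrict_mem (measurableSet_hypograph hr))

lemma map_fst_hypographMeasure (hr : Measurable r) :
    (hypographMeasure P r).map Prod.fst = P.withDensity fun x ↦ ENNReal.ofReal (r x) := by
  ext s hs
  rw [Measure.map_apply measurable_fst hs, hypographMeasure,
    Measure.restrict_apply (measurable_fst hs),
    Measure.prod_apply ((measurable_fst hs).inter (measurableSet_hypograph hr)),
    withDensity_apply _ hs, ← lintegral_indicator hs]
  refine lintegral_congr fun x ↦ ?_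
  by_cases hx : x ∈ s
  · have hfiber : Prod.mk x ⁻¹' (Prod.fst ⁻¹' s ∩ {p : α × ℝ | p.2 ≤ r p.1}) = Set.Iic (r x) := by
      ext; simp [hx]
    rw [hfiber, Measure.restrict_apply measurableSet_Iic, Set.inter_comm, Set.Ioi_inter_Iic]
    simp [hx]
  · have hfiber : Prod.mk x ⁻¹' (Prod.fst ⁻¹' s ∩ {p : α × ℝ | p.2 ≤ r p.1}) = ∅ := by
      ext; simp [hx]
    rw [hfiber, measure_empty, Set.indicator_of_notMem hx]

lemma map_snd_hypographMeasure [SFinite P] (hr : Measurable r) :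
    (hypographMeasure P r).map Prod.snd =
      (volume.restrict (Set.Ioi 0)).withDensity fun h ↦ P {x | h ≤ r x} := by
  ext s hs
  rw [Measure.map_apply measurable_snd hs, hypographMeasure,
    Measure.restrict_apply (measurable_snd hs),
    Measure.prod_apply_symm ((measurable_snd hs).inter (measurableSet_hypograph hr)),
    withDensity_apply _ hs, ← lintegral_indicator hs]
  refine lintegral_congr fun h ↦ ?_
  by_cases hh : h ∈ s
  · have hfiber : (fun x ↦ (x, h)) ⁻¹' (Prod.snd ⁻¹' s ∩ {p : α × ℝ | p.2 ≤ r p.1}) =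
        {x | h ≤ r x} := by
      ext; simp [hh]
    rw [hfiber, Set.indicator_of_mem hh]
  · have hfiber : (fun x ↦ (x, h)) ⁻¹' (Prod.snd ⁻¹' s ∩ {p : α × ℝ | p.2 ≤ r p.1}) = ∅ := by
      ext; simp [hh]
    rw [hfiber, measure_empty, Set.indicator_of_notMem hh]

lemma integrable_comp_fst_hypographMeasure_iff (hr : Measurable r) (hr0 : 0 ≤ r)
    (hf : Measurable f) :
    Integrable (fun p ↦ f p.1) (hypographMeasure P r) ↔ Integrable (fun x ↦ r x * f x) P := by
  have hmap := integrable_map_measure (μ := hypographMeasure P r) hf.aestronglyMeasurable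
    measurable_fst.aemeasurable
  rw [← Function.comp_def f, ← hmap, map_fst_hypographMeasure hr,
    integrable_withDensity_iff_integrable_smul' hr.ennreal_ofReal (by simp)]
  simp only [ENNReal.toReal_ofReal (hr0 _), smul_eq_mul]

lemma integral_comp_fst_hypographMeasure (hr : Measurable r) (hr0 : 0 ≤ r) (hf : Measurable f) :
    ∫ p, f p.1 ∂hypographMeasure P r = ∫ x, r x * f x ∂P := by
  rw [← integral_map (f := f) measurable_fst.aemeasurable hf.aestronglyMeasurable,
    map_fst_hypographMeasure hr,
    integral_withDensity_eq_integral_toReal_smul hr.ennreal_ofReal (by simp)]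
  simp only [ENNReal.toReal_ofReal (hr0 _), smul_eq_mul]

lemma ae_measure_superlevel_lt_top (hr : Integrable r P) :
    ∀ᵐ h ∂volume.restrict (Set.Ioi (0 : ℝ)), P {x | h ≤ r x} < ⊤ := by
  filter_upwards [ae_restrict_mem measurableSet_Ioi] with h hh
  exact hr.measure_ge_lt_top hh

lemma antitone_measure_superlevel : Antitone fun h ↦ P {x | h ≤ r x} :=
  fun _ _ hab ↦ measure_mono fun _ hx ↦ hab.trans hx

lemma integrable_comp_snd_hypographMeasure_iff [SFinite P] (hr : Measurable r)
    (hri : Integrable r P) (hg : Measurable g) :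
    Integrable (fun p ↦ g p.2) (hypographMeasure P r) ↔
      IntegrableOn (fun h ↦ widthFunction P r h * g h) (Set.Ioi 0) := by
  have hmap := integrable_map_measure (μ := hypographMeasure P r) hg.aestronglyMeasurable
    measurable_snd.aemeasurable
  rw [← Function.comp_def g, ← hmap, map_snd_hypographMeasure hr,
    integrable_withDensity_iff_integrable_smul' antitone_measure_superlevel.measurable
      (ae_measure_superlevel_lt_top hri)]
  rfl

lemma integral_comp_snd_hypographMeasure [SFinite P] (hr : Measurable r) (hri : Integrable r P)
    (hg : Measurable g) :
    ∫ p, g p.2 ∂hypographMeasure P r = ∫ h in Set.Ioi 0, widthFunction P r h * g h := by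
  rw [← integral_map (f := g) measurable_snd.aemeasurable hg.aestronglyMeasurable,
    map_snd_hypographMeasure hr,
    integral_withDensity_eq_integral_toReal_smul antitone_measure_superlevel.measurable
      (ae_measure_superlevel_lt_top hri)]
  rfl

lemma ae_hypographMeasure_widthFunction_pos [SFinite P] (hr : Measurable r)
    (hri : Integrable r P) : ∀ᵐ p ∂hypographMeasure P r, 0 < widthFunction P r p.2 := by
  refine ae_of_ae_map (p := fun h ↦ 0 < widthFunction P r h) measurable_snd.aemeasurable ?_
  rw [map_snd_hypographMeasure hr, ae_withDensity_iff antitone_measure_superlevel.measurable]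
  filter_upwards [ae_measure_superlevel_lt_top hri] with h hfin hne
  exact ENNReal.toReal_pos hne hfin.ne

lemma measurable_widthFunction : Measurable (widthFunction P r) :=
  antitone_measure_superlevel.measurable.ennreal_toReal

lemma isFiniteMeasure_hypographMeasure (hr : Measurable r) (hri : Integrable r P) :
    IsFiniteMeasure (hypographMeasure P r) := by
  have : IsFiniteMeasure ((hypographMeasure P r).map Prod.fst) := by
    rw [map_fst_hypographMeasure hr]
    exact isFiniteMeasure_withDensity_ofReal hri.2
  exact Measure.isFiniteMeasure_of_map measurable_fst.aemeasurable

lemma integrableOn_widthFunction [SFinite P] (hr : Measurable r) (hri : Integrable r P) :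
    IntegrableOn (widthFunction P r) (Set.Ioi 0) := by
  have := isFiniteMeasure_hypographMeasure hr hri
  simpa only [mul_one] using
    (integrable_comp_snd_hypographMeasure_iff hr hri measurable_const).1 (integrable_const (1 : ℝ))

lemma integral_widthFunction [SFinite P] (hr : Measurable r) (hr0 : 0 ≤ r)
    (hri : Integrable r P) : ∫ h in Set.Ioi 0, widthFunction P r h = ∫ x, r x ∂P := by
  simpa only [mul_one] using (integral_comp_snd_hypographMeasure hr hri measurable_const).symm.trans
    (integral_comp_fst_hypographMeasure (f := fun _ ↦ (1 : ℝ)) hr hr0 measurable_const)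

lemma integrable_mul_widthFunction [SFinite P] (hr : Measurable r) (hri : Integrable r P) :
    Integrable (fun p ↦ r p.1 * widthFunction P r p.2) (hypographMeasure P r) :=
  (hri.mul_prod (integrableOn_widthFunction hr hri)).restrict

lemma integral_mul_widthFunction_le [SFinite P] (hr : Measurable r) (hr0 : 0 ≤ r)
    (hri : Integrable r P) :
    ∫ p, r p.1 * widthFunction P r p.2 ∂hypographMeasure P r ≤ (∫ x, r x ∂P) ^ 2 := by
  calc ∫ p, r p.1 * widthFunction P r p.2 ∂hypographMeasure P r
      ≤ ∫ p, r p.1 * widthFunction P r p.2 ∂P.prod (volume.restrict (Set.Ioi 0)) :=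
        setIntegral_le_integral (hri.mul_prod (integrableOn_widthFunction hr hri))
          (.of_forall fun p ↦ mul_nonneg (hr0 p.1) measureReal_nonneg)
    _ = (∫ x, r x ∂P) ^ 2 := by
        rw [integral_prod_mul, integral_widthFunction hr hr0 hri, sq]

lemma ae_log_add_log_widthFunction_le [SFinite P] (hr : Measurable r) (hri : Integrable r P) :
    ∀ᵐ p ∂hypographMeasure P r,
      log (r p.1) + log (widthFunction P r p.2) ≤ r p.1 * widthFunction P r p.2 - 1 := by
  filter_upwards [ae_hypographMeasure_pos_and_le hr, ae_hypographMeasure_widthFunction_pos hr hri]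
    with p ⟨hpos, hle⟩ hw
  have hrp : 0 < r p.1 := hpos.trans_le hle
  rw [← log_mul hrp.ne' hw.ne']
  exact log_le_sub_one_of_pos (mul_pos hrp hw)

lemma integrable_mul_log_of_integrableOn_widthFunction_mul_log [SFinite P] (hr : Measurable r)
    (hr0 : 0 ≤ r) (hri : Integrable r P)
    (hw : IntegrableOn (fun h ↦ widthFunction P r h * log (widthFunction P r h)) (Set.Ioi 0)) :
    Integrable (fun x ↦ r x * log (r x)) P := by
  have := isFiniteMeasure_hypographMeasure hr hri
  have hlogw : Integrable (fun p ↦ log (widthFunction P r p.2)) (hypographMeasure P r) :=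
    (integrable_comp_snd_hypographMeasure_iff hr hri measurable_widthFunction.log).2 hw
  have hlower : Integrable (fun p ↦ -log⁺ p.2⁻¹) (hypographMeasure P r) :=
    ((integrable_comp_snd_hypographMeasure_iff hr hri
      (continuous_posLog.measurable.comp measurable_inv)).2 (integrableOn_mul_posLog_inv
        (fun _ ↦ measureReal_nonneg) (integrableOn_widthFunction hr hri) hw)).neg
  have hupper := ((integrable_mul_widthFunction hr hri).sub (integrable_const 1)).sub hlogw
  refine (integrable_comp_fst_hypographMeasure_iff hr hr0 hr.log).1 <|
    integrable_of_le_of_le (hr.log.comp measurable_fst).aestronglyMeasurable ?_ ?_ hlower hupper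
  · filter_upwards [ae_hypographMeasure_pos_and_le hr] with p ⟨hpos, hle⟩
    have hlog : log p.2 ≤ log (r p.1) := log_le_log hpos hle
    have hsplit := posLog_sub_posLog_inv (x := p.2)
    linarith [posLog_nonneg (x := p.2)]
  · filter_upwards [ae_log_add_log_widthFunction_le hr hri] with p hp
    simp only [Pi.sub_apply]
    linarith

lemma integral_mul_log_le_neg_integral_widthFunction_mul_log [SFinite P] (hr : Measurable r)
    (hr0 : 0 ≤ r) (hr1 : ∫ x, r x ∂P = 1)
    (hw : IntegrableOn (fun h ↦ widthFunction P r h * log (widthFunction P r h)) (Set.Ioi 0)) :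
    ∫ x, r x * log (r x) ∂P ≤
      -∫ h in Set.Ioi 0, widthFunction P r h * log (widthFunction P r h) := by
  have hri : Integrable r P := integrable_of_integral_eq_one hr1
  have := isFiniteMeasure_hypographMeasure hr hri
  have hlogr : Integrable (fun p ↦ log (r p.1)) (hypographMeasure P r) :=
    (integrable_comp_fst_hypographMeasure_iff hr hr0 hr.log).2
      (integrable_mul_log_of_integrableOn_widthFunction_mul_log hr hr0 hri hw)
  have hlogw : Integrable (fun p ↦ log (widthFunction P r p.2)) (hypographMeasure P r) :=
    (integrable_comp_snd_hypographMeasure_iff hr hri measurable_widthFunction.log).2 hw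
  have hmass : ∫ _, (1 : ℝ) ∂hypographMeasure P r = 1 := by
    rw [integral_comp_fst_hypographMeasure (f := fun _ ↦ 1) hr hr0 measurable_const]
    simpa only [mul_one] using hr1
  have hrw : ∫ p, r p.1 * widthFunction P r p.2 ∂hypographMeasure P r ≤ 1 := by
    simpa only [hr1, one_pow] using integral_mul_widthFunction_le hr hr0 hri
  have hmono := integral_mono_ae (hlogr.add hlogw)
    ((integrable_mul_widthFunction hr hri).sub (integrable_const 1))
    (ae_log_add_log_widthFunction_le hr hri)
  rw [integral_add' hlogr hlogw, integral_sub' (integrable_mul_widthFunction hr hri)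
    (integrable_const 1), hmass, integral_comp_fst_hypographMeasure hr hr0 hr.log,
    integral_comp_snd_hypographMeasure hr hri measurable_widthFunction.log] at hmono
  linarith

section Divergence

lemma integrable_mul_log_of_integrable_mul_logb {b : ℝ} (hb : log b ≠ 0)
    (h : Integrable (fun x ↦ f x * logb b (f x)) P) : Integrable (fun x ↦ f x * log (f x)) P := by
  refine (h.mul_const (log b)).congr (.of_forall fun x ↦ ?_)
  simp only [logb]
  field_simp

/-- The Kullback–Leibler divergence `D_KL(Q‖P)` in bits, for `Q ≪ P`; its value is the junk `0` when
the log-likelihood ratio is not `Q`-integrable. -/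
noncomputable def klBits (Q P : Measure α) : ℝ :=
  ∫ x, logb 2 (Q.rnDeriv P x).toReal ∂Q

/-- The width function `w_P(h) = P {dQ/dP ≥ h}` of `Q` relative to `P`. -/
noncomputable def rnDerivWidth (Q P : Measure α) : ℝ → ℝ :=
  widthFunction P fun x ↦ (Q.rnDeriv P x).toReal

/-- The channel simulation divergence `D_CS(Q‖P)` in bits; its value is the junk `0` when
`w_P log₂ w_P` is not integrable. -/
noncomputable def csdBits (Q P : Measure α) : ℝ :=
  -∫ h in Set.Ioi 0, rnDerivWidth Q P h * logb 2 (rnDerivWidth Q P h)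

variable [SigmaFinite P]

lemma integrable_logb_rnDeriv [IsFiniteMeasure Q] (hQP : Q ≪ P)
    (hCS : IntegrableOn (fun h ↦ rnDerivWidth Q P h * logb 2 (rnDerivWidth Q P h)) (Set.Ioi 0)) :
    Integrable (fun x ↦ logb 2 (Q.rnDeriv P x).toReal) Q :=
  ((integrable_rnDeriv_smul_iff hQP).1 <| integrable_mul_log_of_integrableOn_widthFunction_mul_log
    (Measure.measurable_rnDeriv Q P).ennreal_toReal (fun _ ↦ ENNReal.toReal_nonneg)
    Measure.integrable_toReal_rnDeriv
    (integrable_mul_log_of_integrable_mul_logb (log_pos one_lt_two).ne' hCS)).div_const (log 2)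

theorem klBits_le_csdBits [IsProbabilityMeasure Q] (hQP : Q ≪ P)
    (hCS : IntegrableOn (fun h ↦ rnDerivWidth Q P h * logb 2 (rnDerivWidth Q P h)) (Set.Ioi 0)) :
    klBits Q P ≤ csdBits Q P := by
  have hmass : ∫ x, (Q.rnDeriv P x).toReal ∂P = 1 := by
    rw [Measure.integral_toReal_rnDeriv hQP, probReal_univ]
  have hnats := integral_mul_log_le_neg_integral_widthFunction_mul_log
    (Measure.measurable_rnDeriv Q P).ennreal_toReal (fun _ ↦ ENNReal.toReal_nonneg) hmass
    (integrable_mul_log_of_integrable_mul_logb (log_pos one_lt_two).ne' hCS)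
  calc klBits Q P = (∫ x, log (Q.rnDeriv P x).toReal ∂Q) / log 2 := integral_div ..
    _ = (∫ x, (Q.rnDeriv P x).toReal * log (Q.rnDeriv P x).toReal ∂P) / log 2 := by
        simp only [← smul_eq_mul, integral_rnDeriv_smul hQP]
    _ ≤ (-∫ h in Set.Ioi 0, rnDerivWidth Q P h * log (rnDerivWidth Q P h)) / log 2 :=
        div_le_div_of_nonneg_right hnats (log_nonneg one_le_two)
    _ = csdBits Q P := by
        simp only [csdBits, logb, ← mul_div_assoc, integral_div, neg_div]

end Divergence

theorem kl_le_csd_and_mutualInfo_le_general {𝒴 : Type*} [MeasurableSpace 𝒴]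
    (PX : Measure α) [SigmaFinite PX] (ν : Measure 𝒴)
    (μ : 𝒴 → Measure α) [∀ y, IsProbabilityMeasure (μ y)]
    (habs : ∀ᵐ y ∂ν, μ y ≪ PX)
    (hCSfin : ∀ᵐ y ∂ν, IntegrableOn
      (fun h ↦ rnDerivWidth (μ y) PX h * logb 2 (rnDerivWidth (μ y) PX h)) (Set.Ioi 0))
    (hKLint : Integrable (fun y ↦ klBits (μ y) PX) ν)
    (hCSint : Integrable (fun y ↦ csdBits (μ y) PX) ν) :
    (∀ᵐ y ∂ν, Integrable (fun x ↦ logb 2 ((μ y).rnDeriv PX x).toReal) (μ y) ∧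
      klBits (μ y) PX ≤ csdBits (μ y) PX) ∧
    ∫ y, klBits (μ y) PX ∂ν ≤ ∫ y, csdBits (μ y) PX ∂ν := by
  have hpointwise : ∀ᵐ y ∂ν, Integrable (fun x ↦ logb 2 ((μ y).rnDeriv PX x).toReal) (μ y) ∧
      klBits (μ y) PX ≤ csdBits (μ y) PX := by
    filter_upwards [habs, hCSfin] with y hac hCS
    exact ⟨integrable_logb_rnDeriv hac hCS, klBits_le_csdBits hac hCS⟩
  exact ⟨hpointwise, integral_mono_ae hKLint hCSint (hpointwise.mono fun _ hy ↦ hy.2)⟩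

end ChannelSimulation

/-- For a family of conditional distributions `μ y = P_{X|Y=y} ≪ P_X` (with `ν` the law
of `Y`), the pointwise inequality `D_KL(P_{X|Y=y} ‖ P_X) ≤ D_CS(P_{X|Y=y} ‖ P_X)` holds
for `ν`-almost every `y`, and hence `I(X;Y) = E_Y[D_KL] ≤ E_Y[D_CS]` (divergences in
bits). -/
theorem kl_le_csd_and_mutualInfo_le {α 𝒴 : Type*} [MeasurableSpace α] [MeasurableSpace 𝒴]
    (PX : Measure α) [IsProbabilityMeasure PX]
    (ν : Measure 𝒴) [IsProbabilityMeasure ν]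
    (μ : 𝒴 → Measure α) [∀ y, IsProbabilityMeasure (μ y)]
    (habs : ∀ᵐ y ∂ν, μ y ≪ PX)
    (r : 𝒴 → α → ℝ) (hr : r = fun y x => ((μ y).rnDeriv PX x).toReal)
    (w : 𝒴 → ℝ → ℝ) (hw : w = fun y h => (PX {x | h ≤ r y x}).toReal)
    (DKL DCS : 𝒴 → ℝ)
    (hDKL : DKL = fun y => ∫ x, logb 2 (r y x) ∂(μ y))
    (hDCS : DCS = fun y => -∫ h in Set.Ioi (0 : ℝ), w y h * logb 2 (w y h))
    -- finiteness of the divergences and of their expectations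
    (hKLfin : ∀ᵐ y ∂ν, Integrable (fun x => logb 2 (r y x)) (μ y))
    (hCSfin : ∀ᵐ y ∂ν, IntegrableOn (fun h => w y h * logb 2 (w y h)) (Set.Ioi (0 : ℝ)))
    (hKLint : Integrable DKL ν) (hCSint : Integrable DCS ν) :
    (∀ᵐ y ∂ν, DKL y ≤ DCS y) ∧ ∫ y, DKL y ∂ν ≤ ∫ y, DCS y ∂ν := by
  subst hr hw hDKL hDCS
  have h := kl_le_csd_and_mutualInfo_le_general PX ν μ habs hCSfin hKLint hCSint
  exact ⟨h.1.mono fun _ hy ↦ hy.2, h.2⟩
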